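/- The ℤ-module isomorphism h : ℤ^d[C] → ℤ[x]/Pℤ[x] with h(C^i e₁) = X^i for all i ∈ ℕ maps Cℤ^d[C] bijectively onto the ideal (X) of ℤ[x]/Pℤ[x] generated by X; consequently, h induces a ℤ-module isomorphism ℤ^d[C]/Cℤ^d[C] ≅ (ℤ[x]/Pℤ[x])/(X). -/

import Mathlib

open Matrix Polynomial

noncomputable section

/-- `ℤᵈ[C]` as a `ℤ`-submodule of `ℚᵈ`. -/
def intSpanSub {n : ℕ} (A : Matrix (Fin n) (Fin n) ℚ) : Submodule ℤ (Fin n → ℚ) :=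
  Submodule.span ℤ
    {x | ∃ (i : ℕ) (v : Fin n → ℤ), x = (A ^ i).mulVec (fun j => ((v j : ℚ)))}

/-- The companion matrix of a monic polynomial of degree `n`. -/
def companionMat (n : ℕ) (q : Polynomial ℚ) : Matrix (Fin n) (Fin n) ℚ :=
  Matrix.of fun i j =>
    (if (i : ℕ) = (j : ℕ) + 1 then 1 else 0) +
    (if (j : ℕ) = n - 1 then -(q.coeff i) else 0)

/-- `C·ℤᵈ[C]` as a `ℤ`-submodule of `ℚᵈ`. -/
def cImage {n : ℕ} (A : Matrix (Fin n) (Fin n) ℚ) : Submodule ℤ (Fin n → ℚ) :=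
  Submodule.map ((Matrix.mulVecLin A).restrictScalars ℤ) (intSpanSub A)

theorem companion_pow_single {d : ℕ} (q : Polynomial ℚ) (hd : 0 < d) (j : ℕ) (hj : j < d) :
    ((companionMat d q) ^ j).mulVec (Pi.single (⟨0, hd⟩ : Fin d) (1 : ℚ)) =
      Pi.single (⟨j, hj⟩ : Fin d) (1 : ℚ) := by
  induction j with
  | zero => rw [pow_zero, Matrix.one_mulVec]
  | succ k ih =>
    have hk : k < d := by omega
    rw [pow_succ', ← Matrix.mulVec_mulVec, ih hk, Matrix.mulVec_single_one]
    ext i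
    have h1 : ¬ (k = d - 1) := by omega
    simp [companionMat, Matrix.col_apply, Pi.single_apply, Fin.ext_iff, h1]

theorem intSpanSub_eq {d : ℕ} (q : Polynomial ℚ) (hd : 0 < d) :
    intSpanSub (companionMat d q) = Submodule.span ℤ (Set.range fun i : ℕ =>
      ((companionMat d q) ^ i).mulVec (Pi.single (⟨0, hd⟩ : Fin d) (1 : ℚ))) := by
  apply le_antisymm
  · refine Submodule.span_le.2 ?_
    rintro x ⟨i, v, rfl⟩
    have hv : (fun j => ((v j : ℚ))) = ∑ j : Fin d, (v j) •
        ((companionMat d q) ^ (j : ℕ)).mulVec (Pi.single (⟨0, hd⟩ : Fin d) (1 : ℚ)) := by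
      have : ∀ j : Fin d, ((companionMat d q) ^ (j : ℕ)).mulVec
          (Pi.single (⟨0, hd⟩ : Fin d) (1 : ℚ)) = Pi.single j 1 :=
        fun j => companion_pow_single q hd j j.2
      simp_rw [this]
      ext k
      simp [Finset.sum_apply, Pi.single_apply]
    rw [hv, Matrix.mulVec_sum]
    refine Submodule.sum_mem _ fun j _ => ?_
    rw [Matrix.mulVec_smul, Matrix.mulVec_mulVec, ← pow_add]
    exact Submodule.smul_mem _ _ (Submodule.subset_span ⟨_, rfl⟩)
  · refine Submodule.span_le.2 ?_
    rintro x ⟨i, rfl⟩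
    refine Submodule.subset_span ⟨i, Pi.single ⟨0, hd⟩ 1, ?_⟩
    have e : (Pi.single (⟨0, hd⟩ : Fin d) (1 : ℚ)) =
        fun j => (((Pi.single (⟨0, hd⟩ : Fin d) (1 : ℤ) : Fin d → ℤ) j : ℤ) : ℚ) := by
      ext k
      simp [Pi.single_apply]
    rw [← e]

/-- any `ℤ`-module isomorphism `h : ℤᵈ[C] ≃ ℤ[x]/Pℤ[x]` with
`h(Cⁱe₁) = Xⁱ` maps `Cℤᵈ[C]` bijectively onto the ideal `(X)`; consequently it
induces a `ℤ`-module isomorphism `ℤᵈ[C]/Cℤᵈ[C] ≅ (ℤ[x]/Pℤ[x])/(X)`. -/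
theorem stmt13 (d : ℕ) (hd : 1 ≤ d) (P : Polynomial ℤ)
    (hdeg : P.natDegree = d) (hprim : P.IsPrimitive)
    (hlead : P.coeff d ≠ 0) (h0 : P.coeff 0 ≠ 0)
    (c : ℤ) (q : Polynomial ℚ) (hq : q.Monic)
    (hPq : P.map (Int.castRingHom ℚ) = Polynomial.C (c : ℚ) * q)
    (Cm : Matrix (Fin d) (Fin d) ℚ) (hCm : Cm = companionMat d q)
    (e₁ : Fin d → ℚ) (he₁ : e₁ = fun j : Fin d => if (j : ℕ) = 0 then 1 else 0) :
    ∀ h : intSpanSub Cm ≃ₗ[ℤ] Polynomial ℤ ⧸ Ideal.span {P},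
      (∀ (x : intSpanSub Cm) (i : ℕ),
        (x : Fin d → ℚ) = (Cm ^ i).mulVec e₁ →
        h x = (Ideal.Quotient.mk (Ideal.span {P}) X) ^ i) →
      (⇑h '' {x : intSpanSub Cm | (x : Fin d → ℚ) ∈ cImage Cm} =
        ↑(Submodule.restrictScalars ℤ
          (Ideal.span {Ideal.Quotient.mk (Ideal.span {P}) X}))) ∧
      Nonempty
        ((intSpanSub Cm ⧸ Submodule.comap (intSpanSub Cm).subtype (cImage Cm))
          ≃ₗ[ℤ]
          ((Polynomial ℤ ⧸ Ideal.span {P}) ⧸ Submodule.restrictScalars ℤ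
            (Ideal.span {Ideal.Quotient.mk (Ideal.span {P}) X}))) := by
  intro h hh
  have he : e₁ = Pi.single (⟨0, hd⟩ : Fin d) (1 : ℚ) := by
    rw [he₁]; ext k; simp [Pi.single_apply, Fin.ext_iff]
  have hS : intSpanSub Cm = Submodule.span ℤ (Set.range fun i : ℕ => (Cm ^ i).mulVec e₁) := by
    rw [hCm, he]; exact intSpanSub_eq q hd
  have hgen : ∀ i : ℕ, (Cm ^ i).mulVec e₁ ∈ intSpanSub Cm := fun i => by
    rw [hS]; exact Submodule.subset_span ⟨i, rfl⟩
  have key : ∀ y : Fin d → ℚ, y ∈ intSpanSub Cm → ∃ (hy : y ∈ intSpanSub Cm)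
      (hy' : Cm.mulVec y ∈ intSpanSub Cm),
      h ⟨_, hy'⟩ = Ideal.Quotient.mk (Ideal.span {P}) X * h ⟨y, hy⟩ := by
    intro y hy
    rw [hS] at hy
    induction hy using Submodule.span_induction with
    | mem x hx =>
      obtain ⟨i, rfl⟩ := hx
      have e : Cm.mulVec ((Cm ^ i).mulVec e₁) = (Cm ^ (i + 1)).mulVec e₁ := by
        rw [Matrix.mulVec_mulVec, ← pow_succ']
      refine ⟨hgen i, e ▸ hgen (i + 1), ?_⟩
      rw [hh _ (i + 1) e, hh _ i rfl, pow_succ']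
    | zero =>
      refine ⟨zero_mem _, by simp, ?_⟩
      have e1 : h ⟨0, zero_mem _⟩ = 0 := h.map_zero
      have e2 : (⟨Cm.mulVec 0, by simp⟩ : intSpanSub Cm) = 0 := Subtype.ext (by simp)
      rw [e1, e2, map_zero, mul_zero]
    | add x y _ _ hx hy =>
      obtain ⟨a, a', ha⟩ := hx
      obtain ⟨b, b', hb⟩ := hy
      have hm : Cm.mulVec (x + y) ∈ intSpanSub Cm := by
        rw [Matrix.mulVec_add]; exact add_mem a' b'
      refine ⟨add_mem a b, hm, ?_⟩
      have e1 : (⟨x + y, add_mem a b⟩ : intSpanSub Cm) = ⟨x, a⟩ + ⟨y, b⟩ := rfl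
      have e2 : (⟨Cm.mulVec (x + y), hm⟩ : intSpanSub Cm) = ⟨_, a'⟩ + ⟨_, b'⟩ :=
        Subtype.ext (Matrix.mulVec_add Cm x y)
      rw [e1, e2, map_add, map_add, ha, hb, mul_add]
    | smul n x _ hx =>
      obtain ⟨a, a', ha⟩ := hx
      have hm : Cm.mulVec (n • x) ∈ intSpanSub Cm := by
        rw [Matrix.mulVec_smul]; exact Submodule.smul_mem _ n a'
      refine ⟨Submodule.smul_mem _ n a, hm, ?_⟩
      have e1 : (⟨n • x, Submodule.smul_mem _ n a⟩ : intSpanSub Cm) = n • ⟨x, a⟩ := rfl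
      have e2 : (⟨Cm.mulVec (n • x), hm⟩ : intSpanSub Cm) = n • ⟨_, a'⟩ :=
        Subtype.ext (Matrix.mulVec_smul Cm n x)
      rw [e1, e2, map_zsmul, map_zsmul, ha, mul_smul_comm]
  have main : ⇑h '' {x : intSpanSub Cm | (x : Fin d → ℚ) ∈ cImage Cm} =
        ↑(Submodule.restrictScalars ℤ
          (Ideal.span {Ideal.Quotient.mk (Ideal.span {P}) X})) := by
    ext z
    constructor
    · rintro ⟨⟨x, hx⟩, ⟨y, hy, hyx⟩, rfl⟩
      obtain ⟨a, a', ha⟩ := key y hy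
      have hyx' : Cm.mulVec y = x := hyx
      subst hyx'
      rw [ha]
      exact Ideal.mul_mem_right _ _ (Ideal.subset_span rfl)
    · intro hz
      obtain ⟨w, rfl⟩ := Ideal.mem_span_singleton'.1 hz
      obtain ⟨a, a', ha⟩ := key _ (h.symm w).2
      refine ⟨⟨_, a'⟩, ⟨_, a, rfl⟩, ?_⟩
      rw [ha, mul_comm]
      congr 1
      exact h.apply_symm_apply w
  refine ⟨main, ⟨Submodule.Quotient.equiv _ _ h ?_⟩⟩
  apply SetLike.coe_injective
  rw [← main]
  rfl
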